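/- Let (X,ρ) be a metric space, let f : [0,∞) → [0,∞) be an unbounded modulus, let (A_i) be a sequence in CL(X) and let A ∈ CL(X). Then [WS^f]-lim A_i = A holds if and only if, for each x ∈ X, there exists a set K_x ⊆ ℕ such that d^f(K_x) = 0 and the sequence (d(x,A_i)) restricted to indices i ∈ ℕ − K_x converges to d(x,A). -/

import Mathlib

open Filter Metric Set
open scoped Classical

/-- A modulus: `f : [0,∞) → [0,∞)` with `f x = 0 ↔ x = 0`, subadditive,
increasing, and continuous (all on `[0,∞)`). -/
def IsModulus (f : ℝ → ℝ) : Prop :=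
  (∀ x : ℝ, 0 ≤ x → 0 ≤ f x) ∧
  (∀ x : ℝ, 0 ≤ x → (f x = 0 ↔ x = 0)) ∧
  (∀ x y : ℝ, 0 ≤ x → 0 ≤ y → f (x + y) ≤ f x + f y) ∧
  MonotoneOn f (Set.Ici 0) ∧
  ContinuousOn f (Set.Ici 0)

/-- `f` is unbounded on `[0,∞)`. -/
def IsUnboundedOn (f : ℝ → ℝ) : Prop := ∀ M : ℝ, ∃ x : ℝ, 0 ≤ x ∧ M < f x

/-- The number of elements `k ≤ n` with `k ∈ K`. -/
noncomputable def countLe (K : Set ℕ) (n : ℕ) : ℕ := Nat.card {k : ℕ | k ≤ n ∧ k ∈ K}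

/-- `K ⊆ ℕ` has `f`-density `d`: `lim_n f(|{k ≤ n : k ∈ K}|)/f(n) = d`. -/
def HasFDensity (f : ℝ → ℝ) (K : Set ℕ) (d : ℝ) : Prop :=
  Tendsto (fun n : ℕ => f (countLe K n : ℝ) / f (n : ℝ)) atTop (nhds d)

/-- `K ⊆ ℕ` has natural density `d`: `lim_n |{k ≤ n : k ∈ K}|/n = d`. -/
def HasNatDensity (K : Set ℕ) (d : ℝ) : Prop :=
  Tendsto (fun n : ℕ => (countLe K n : ℝ) / (n : ℝ)) atTop (nhds d)

/-- Wijsman convergence: `d(x, A_k) → d(x, A)` for every `x`. -/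
def WijsmanConvTo {X : Type*} [MetricSpace X] (Aseq : ℕ → Set X) (A : Set X) : Prop :=
  ∀ x : X, Tendsto (fun k : ℕ => infDist x (Aseq k)) atTop (nhds (infDist x A))

/-- Wijsman statistical convergence (with respect to the natural density). -/
def WijsmanStatConvTo {X : Type*} [MetricSpace X] (Aseq : ℕ → Set X) (A : Set X) : Prop :=
  ∀ x : X, ∀ ε : ℝ, 0 < ε →
    HasNatDensity {k : ℕ | ε ≤ |infDist x (Aseq k) - infDist x A|} 0

/-- `f`-Wijsman statistical convergence: `[WS^f]-lim A_k = A`. -/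
def FWijsmanStatConvTo (f : ℝ → ℝ) {X : Type*} [MetricSpace X]
    (Aseq : ℕ → Set X) (A : Set X) : Prop :=
  ∀ x : X, ∀ ε : ℝ, 0 < ε →
    HasFDensity f {k : ℕ | ε ≤ |infDist x (Aseq k) - infDist x A|} 0

/-- Wijsman boundedness: `sup_k d(x, A_k) < ∞` for every `x`. -/
def WijsmanBounded {X : Type*} [MetricSpace X] (Aseq : ℕ → Set X) : Prop :=
  ∀ x : X, ∃ M : ℝ, ∀ k : ℕ, infDist x (Aseq k) ≤ M

/-- Wijsman Cesàro summability to `A`. -/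
def WijsmanCesaroTo {X : Type*} [MetricSpace X] (Aseq : ℕ → Set X) (A : Set X) : Prop :=
  ∀ x : X, Tendsto (fun n : ℕ => (∑ k ∈ Finset.range n, infDist x (Aseq k)) / (n : ℝ))
    atTop (nhds (infDist x A))

/-- Wijsman strong Cesàro summability to `A` with respect to a modulus `f`:
`[Ww^f]-lim A_k = A`. -/
def WijsmanStrongCesaroTo (f : ℝ → ℝ) {X : Type*} [MetricSpace X]
    (Aseq : ℕ → Set X) (A : Set X) : Prop :=
  ∀ x : X, Tendsto
    (fun n : ℕ => (∑ k ∈ Finset.range n, f |infDist x (Aseq k) - infDist x A|) / (n : ℝ))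
    atTop (nhds 0)

/-- A slowly varying modulus: `lim_{x→∞} f(ax)/f(x) = 1` for every `a > 0`. -/
def SlowlyVaryingOn (f : ℝ → ℝ) : Prop :=
  ∀ a : ℝ, 0 < a → Tendsto (fun x : ℝ => f (a * x) / f x) atTop (nhds 1)

lemma countLe_mono_aux {K L : Set ℕ} {n : ℕ} (h : ∀ k, k ≤ n → k ∈ K → k ∈ L) :
    countLe K n ≤ countLe L n := by
  unfold countLe
  apply Nat.card_mono
  · exact (Set.finite_Iic n).subset (fun k hk => hk.1)
  · exact fun k hk => ⟨hk.1, h k hk.1 hk.2⟩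

lemma countLe_add_aux {K L : Set ℕ} {m n : ℕ} (h : ∀ k, m ≤ k → k ∈ L → k ∈ K) :
    countLe L n ≤ countLe K n + m := by
  unfold countLe
  simp only [Nat.card_coe_set_eq]
  have hm : (Set.Iio m).ncard = m := by
    rw [← Nat.card_coe_set_eq]; simp
  calc _ ≤ ({k : ℕ | k ≤ n ∧ k ∈ K} ∪ Set.Iio m).ncard := by
        apply Set.ncard_le_ncard
        · intro k hk
          by_cases hkm : m ≤ k
          · exact Or.inl ⟨hk.1, h k hkm hk.2⟩
          · exact Or.inr (not_le.mp hkm)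
        · exact ((Set.finite_Iic n).subset (fun k hk => hk.1)).union (Set.finite_Iio m)
    _ ≤ _ := by
        refine (Set.ncard_union_le _ _).trans ?_
        rw [hm]

lemma modulus_ratio_le {f : ℝ → ℝ} (hf : IsModulus f) {a b n : ℕ} (h : a ≤ b) :
    f a / f n ≤ f b / f n := by
  apply div_le_div_of_nonneg_right _ (hf.1 _ (Nat.cast_nonneg n))
  exact hf.2.2.2.1 (Set.mem_Ici.2 (Nat.cast_nonneg a)) (Set.mem_Ici.2 (Nat.cast_nonneg b))
    (Nat.cast_le.2 h)

lemma modulus_ratio_nonneg {f : ℝ → ℝ} (hf : IsModulus f) (a n : ℕ) : 0 ≤ f a / f n :=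
  div_nonneg (hf.1 _ (Nat.cast_nonneg a)) (hf.1 _ (Nat.cast_nonneg n))

lemma modulus_tendsto {f : ℝ → ℝ} (hf : IsModulus f) (hfu : IsUnboundedOn f) :
    Tendsto (fun n : ℕ => f (n : ℝ)) atTop atTop := by
  rw [Filter.tendsto_atTop]
  intro M
  obtain ⟨x, hx, hM⟩ := hfu M
  obtain ⟨m, hm⟩ := exists_nat_ge x
  filter_upwards [eventually_ge_atTop m] with n hn
  have hxn : x ≤ (n : ℝ) := hm.trans (Nat.cast_le.2 hn)
  exact hM.le.trans (hf.2.2.2.1 (Set.mem_Ici.2 hx) (Set.mem_Ici.2 (hx.trans hxn)) hxn)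

/-- A diagonal set for an increasing sequence of sets of zero `f`-density. -/
lemma exists_diagonal {f : ℝ → ℝ} (hf : IsModulus f) (K : ℕ → Set ℕ) (hK : Monotone K)
    (h0 : ∀ j, HasFDensity f (K j) 0) :
    ∃ L : Set ℕ, HasFDensity f L 0 ∧ ∀ j, ∃ m, ∀ i, m ≤ i → i ∈ K j → i ∈ L := by
  have h1 : ∀ j : ℕ, ∃ N : ℕ, j ≤ N ∧ ∀ n, N ≤ n →
      f (countLe (K j) n : ℝ) / f (n : ℝ) < 1 / ((j : ℝ) + 1) := by
    intro j
    have := (h0 j).eventually (gt_mem_nhds (Nat.one_div_pos_of_nat (α := ℝ) (n := j)))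
    obtain ⟨N, hN⟩ := eventually_atTop.1 this
    exact ⟨max j N, le_max_left _ _, fun n hn => hN n ((le_max_right _ _).trans hn)⟩
  choose N hN hlt using h1
  refine ⟨{i | ∃ j, N j ≤ i ∧ i ∈ K j}, ?_, fun j => ⟨N j, fun i hi hij => ⟨j, hi, hij⟩⟩⟩
  unfold HasFDensity
  rw [Metric.tendsto_atTop]
  intro ε hε
  obtain ⟨j0, hj0⟩ := exists_nat_one_div_lt hε
  refine ⟨N j0, fun n hn => ?_⟩
  rw [Real.dist_eq, sub_zero, abs_of_nonneg (modulus_ratio_nonneg hf _ _)]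
  set J := Nat.findGreatest (fun j => N j ≤ n) n with hJ
  have hJn : N J ≤ n :=
    Nat.findGreatest_spec (P := fun j => N j ≤ n) ((hN j0).trans hn) hn
  have hmax : ∀ j, N j ≤ n → j ≤ J := fun j hj =>
    Nat.le_findGreatest ((hN j).trans hj) hj
  calc _ ≤ f (countLe (K J) n : ℝ) / f (n : ℝ) := by
        apply modulus_ratio_le hf
        apply countLe_mono_aux
        rintro k hk ⟨j, hj, hkj⟩
        exact hK (hmax j (hj.trans hk)) hkj
    _ < 1 / ((J : ℝ) + 1) := hlt J n hJn
    _ ≤ 1 / ((j0 : ℝ) + 1) := Nat.one_div_le_one_div (hmax j0 hn)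
    _ < ε := hj0

/-- `[WS^f]-lim A_i = A` iff for each `x` there is `K_x ⊆ ℕ` of zero
`f`-density such that `d(x, A_i) → d(x, A)` along `ℕ − K_x`. -/
theorem stmt5 {X : Type*} [MetricSpace X] (f : ℝ → ℝ)
    (hf : IsModulus f) (hfu : IsUnboundedOn f)
    (A : Set X) (hA : A.Nonempty) (hAcl : IsClosed A)
    (Aseq : ℕ → Set X) (hAseq : ∀ i, (Aseq i).Nonempty ∧ IsClosed (Aseq i)) :
    FWijsmanStatConvTo f Aseq A ↔
      ∀ x : X, ∃ Kx : Set ℕ, HasFDensity f Kx 0 ∧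
        ∀ ε : ℝ, 0 < ε → ∃ i₀ : ℕ, ∀ i : ℕ, i ∉ Kx → i₀ ≤ i →
          |infDist x (Aseq i) - infDist x A| ≤ ε := by
  constructor
  · intro h x
    obtain ⟨L, hL, hm⟩ := exists_diagonal hf
      (fun j : ℕ => {k : ℕ | 1 / ((j : ℝ) + 1) ≤ |infDist x (Aseq k) - infDist x A|})
      (fun a b hab k hk => le_trans (α := ℝ) (Nat.one_div_le_one_div hab) hk)
      (fun j => h x _ Nat.one_div_pos_of_nat)
    refine ⟨L, hL, fun ε hε => ?_⟩
    obtain ⟨j, hj⟩ := exists_nat_one_div_lt hε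
    obtain ⟨m, hm⟩ := hm j
    refine ⟨m, fun i hi hmi => ?_⟩
    by_contra hcon
    exact hi (hm i hmi (hj.le.trans (not_le.1 hcon).le))
  · intro h x ε hε
    obtain ⟨K, hK, hc⟩ := h x
    obtain ⟨m, hm⟩ := hc (ε / 2) (half_pos hε)
    have hlim : Tendsto (fun n : ℕ => f (countLe K n : ℝ) / f (n : ℝ) + f (m : ℝ) / f (n : ℝ))
        atTop (nhds 0) := by
      have := Tendsto.add hK ((modulus_tendsto hf hfu).const_div_atTop (f (m : ℝ)))
      simpa using this
    refine squeeze_zero (fun n => modulus_ratio_nonneg hf _ _) (fun n => ?_) hlim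
    refine (modulus_ratio_le hf (countLe_add_aux (K := K) (m := m) ?_)).trans ?_
    · intro k hk hkε
      by_contra hkK
      have h1 := hm k hkK hk
      have h2 : ε ≤ |infDist x (Aseq k) - infDist x A| := hkε
      linarith
    · rw [← add_div]
      apply div_le_div_of_nonneg_right _ (hf.1 _ (Nat.cast_nonneg n))
      push_cast
      exact hf.2.2.1 _ _ (Nat.cast_nonneg _) (Nat.cast_nonneg _)
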